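/- Let A be a finite-dimensional left Leibniz algebra over a field F of characteristic zero and let B and C be nilpotent subinvariant subalgebras of A. Then the subalgebra D generated by B and C is a nilpotent subinvariant subalgebra of A. -/

import Mathlib

open Submodule

section LeibnizDefs

variable {F : Type*} {A : Type*} [Field F] [AddCommGroup A] [Module F A]

/-- The span of all products `b*c` with `b ∈ B`, `c ∈ C`. -/
def mulSub (mul : A →ₗ[F] A →ₗ[F] A) (B C : Submodule F A) : Submodule F A :=
  Submodule.span F {z : A | ∃ b ∈ B, ∃ c ∈ C, mul b c = z}

/-- `fSub mul B C = B·C + C·B`, the function `f(B,C)`. -/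
def fSub (mul : A →ₗ[F] A →ₗ[F] A) (B C : Submodule F A) : Submodule F A :=
  mulSub mul B C ⊔ mulSub mul C B

/-- `fIter mul B C n = f^{n+1}(B,C)` (so index `0` is `f^1(B,C) = f(B,C)`). -/
def fIter (mul : A →ₗ[F] A →ₗ[F] A) (B C : Submodule F A) : ℕ → Submodule F A
  | 0 => fSub mul B C
  | n + 1 => fSub mul B (fIter mul B C n)

/-- `lcs mul B n = B^{n+1}`, the lower central series (index `0` is `B^1 = B`). -/
def lcs (mul : A →ₗ[F] A →ₗ[F] A) (B : Submodule F A) : ℕ → Submodule F A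
  | 0 => B
  | n + 1 => mulSub mul B (lcs mul B n)

/-- `ds mul B n = B^{(n+1)}`, the derived series (index `0` is `B^{(1)} = B`). -/
def ds (mul : A →ₗ[F] A →ₗ[F] A) (B : Submodule F A) : ℕ → Submodule F A
  | 0 => B
  | n + 1 => mulSub mul (ds mul B n) (ds mul B n)

/-- `B^ω = ⋂_{i ≥ 1} B^i`. -/
def omegaSub (mul : A →ₗ[F] A →ₗ[F] A) (B : Submodule F A) : Submodule F A :=
  ⨅ n, lcs mul B n

/-- `B` is a subalgebra: a subspace closed under multiplication. -/
def IsSubalg (mul : A →ₗ[F] A →ₗ[F] A) (B : Submodule F A) : Prop :=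
  ∀ x ∈ B, ∀ y ∈ B, mul x y ∈ B

/-- `I` is an ideal of the subalgebra `S`: `I ⊆ S` and `xI + Ix ⊆ I` for all `x ∈ S`. -/
def IsIdealIn (mul : A →ₗ[F] A →ₗ[F] A) (I S : Submodule F A) : Prop :=
  I ≤ S ∧ ∀ x ∈ S, ∀ y ∈ I, mul x y ∈ I ∧ mul y x ∈ I

/-- `B` is subinvariant in `S`: there is a chain of subalgebras
`B = c 0 ⊆ c 1 ⊆ ⋯ ⊆ c t = S` with each term an ideal of the next. -/
def IsSubinvariantIn (mul : A →ₗ[F] A →ₗ[F] A) (B S : Submodule F A) : Prop :=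
  ∃ (t : ℕ) (c : ℕ → Submodule F A), c 0 = B ∧ c t = S ∧
    (∀ i ≤ t, IsSubalg mul (c i)) ∧ ∀ i < t, IsIdealIn mul (c i) (c (i + 1))

/-- `B` is nilpotent: `B^m = 0` for some `m`. -/
def IsNilpotentSub (mul : A →ₗ[F] A →ₗ[F] A) (B : Submodule F A) : Prop :=
  ∃ m, lcs mul B m = ⊥

/-- `B` is solvable: `B^{(m)} = 0` for some `m`. -/
def IsSolvableSub (mul : A →ₗ[F] A →ₗ[F] A) (B : Submodule F A) : Prop :=
  ∃ m, ds mul B m = ⊥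

/-- The centralizer `Z_A(B) = {x : xb = 0 = bx for all b ∈ B}`. -/
def centralizerSet (mul : A →ₗ[F] A →ₗ[F] A) (B : Submodule F A) : Set A :=
  {x : A | ∀ b ∈ B, mul x b = 0 ∧ mul b x = 0}

/-- `R` is the radical (the maximal solvable ideal) of the subalgebra `S`. -/
def IsRadicalIn (mul : A →ₗ[F] A →ₗ[F] A) (S R : Submodule F A) : Prop :=
  IsIdealIn mul R S ∧ IsSolvableSub mul R ∧
    ∀ T, IsIdealIn mul T S → IsSolvableSub mul T → T ≤ R

/-- `N` is the nilradical (the maximal nilpotent ideal) of the subalgebra `S`. -/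
def IsNilradicalIn (mul : A →ₗ[F] A →ₗ[F] A) (S N : Submodule F A) : Prop :=
  IsIdealIn mul N S ∧ IsNilpotentSub mul N ∧
    ∀ T, IsIdealIn mul T S → IsNilpotentSub mul T → T ≤ N

/-- `H` is a Cartan subalgebra: a nilpotent self-normalizing subalgebra. -/
def IsCartan (mul : A →ₗ[F] A →ₗ[F] A) (H : Submodule F A) : Prop :=
  IsSubalg mul H ∧ IsNilpotentSub mul H ∧
    ∀ x : A, (∀ h ∈ H, mul x h ∈ H ∧ mul h x ∈ H) → x ∈ H

/-- The subalgebra generated by a set: the smallest subalgebra containing it. -/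
def subalgGen (mul : A →ₗ[F] A →ₗ[F] A) (s : Set A) : Submodule F A :=
  sInf {S : Submodule F A | IsSubalg mul S ∧ s ⊆ (S : Set A)}

end LeibnizDefs

/-!
In characteristic zero the Jacobson radical of a finite-dimensional algebra `R` is the radical of
the trace form `(x, y) ↦ tr (L_{xy})`. If `d` is a derivation of `R` then `L_{d x} = [d, L_x]` has
trace zero, so `d` preserves the radical. Hence if `R` is contained in an algebra `U` generated by
elements that normalize `R`, then `rad R` generates a nilpotent ideal of `U`, and
`rad R ⊆ rad U`.

In a left Leibniz algebra `L_{xy} = [L_x, L_y]`. For a subinvariant subalgebra `B`, therefore, the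
radicals of the algebras generated by the left multiplications of the members of the chain from `B`
to `A` increase. If `B` is moreover nilpotent, its left multiplications lie in the first of these
radicals, so `B` lies in the ideal `N` of all `x` with `L_x` in the last one. This ideal is
nilpotent and contains both subalgebras, hence also the subalgebra `D` they generate, and `D` is
subinvariant through the chain `D + N ⊇ D + N² ⊇ ⋯ ⊇ D`.
-/

section FiniteDimensionalAlgebra

open Polynomial in
theorem exists_isIdempotentElem_mul_of_isIntegral {F R : Type*} [Field F] [Ring R] [Algebra F R]
    {x : R} (hx : IsIntegral F x) :
    ∃ (y : R) (n : ℕ), IsIdempotentElem (y * x) ∧ y * x * x ^ n = x ^ n := by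
  -- If `minpoly F x = X ^ n * q` with `a * X ^ (n + 1) + b * q = 1`, then `a * X ^ (n + 1)` is
  -- idempotent modulo the minimal polynomial.
  obtain ⟨q, hq, hXq⟩ :=
    exists_eq_pow_rootMultiplicity_mul_and_not_dvd (minpoly F x) (minpoly.ne_zero hx) 0
  set n := (minpoly F x).rootMultiplicity 0
  rw [map_zero, sub_zero] at hq hXq
  obtain ⟨a, b, hab⟩ : IsCoprime (X ^ (n + 1)) q :=
    (irreducible_X.coprime_iff_not_dvd.2 hXq).pow_left
  have hy : aeval x (a * X ^ n) * x = aeval x (a * X ^ (n + 1)) := by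
    simp only [map_mul, map_pow, aeval_X, pow_succ, mul_assoc]
  have hxn : x ^ n = aeval x (X ^ n : F[X]) := by rw [map_pow, aeval_X]
  refine ⟨aeval x (a * X ^ n), n, ?_, ?_⟩
  · rw [IsIdempotentElem, hy, ← map_mul, ← sub_eq_zero, ← map_sub, ← minpoly.dvd_iff, hq]
    exact ⟨-(a * X * b), by linear_combination (a * X ^ (n + 1)) * hab⟩
  · rw [hy, hxn, ← map_mul, ← sub_eq_zero, ← map_sub, ← minpoly.dvd_iff, hq]
    exact ⟨-b, by linear_combination X ^ n * hab⟩

theorem mem_jacobson_of_forall_isNilpotent_mul {R : Type*} [Ring R] {x : R}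
    (h : ∀ y, IsNilpotent (y * x)) : x ∈ Ring.jacobson R := by
  rw [← Ideal.jacobson_bot, Ideal.mem_jacobson_iff]
  intro y
  obtain ⟨z, hz⟩ := (h y).isUnit_add_one.exists_left_inv
  refine ⟨z, ?_⟩
  rwa [Ideal.mem_bot, sub_eq_zero, mul_assoc, ← mul_add_one]

theorem isNilpotent_of_mem_jacobson {R : Type*} [Ring R] [IsArtinianRing R] {x : R}
    (hx : x ∈ Ring.jacobson R) : IsNilpotent x := by
  obtain ⟨n, hn⟩ := IsSemiprimaryRing.isNilpotent (R := R)
  have hxn : x ^ n ∈ Ring.jacobson R ^ n := Submodule.pow_mem_pow _ hx n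
  exact ⟨n, by rwa [hn] at hxn⟩

section Trace

variable {F R : Type*} [CommRing F] [Ring R] [Algebra F R]

variable (F) in
/-- The trace of the left regular representation of an algebra. It plays the role of
`Algebra.trace`, which is only available for commutative algebras. -/
noncomputable def regularTrace : R →ₗ[F] F :=
  LinearMap.trace F R ∘ₗ (Algebra.lmul F R).toLinearMap

theorem regularTrace_apply (x : R) :
    regularTrace F x = LinearMap.trace F R (Algebra.lmul F R x) :=
  rfl

theorem regularTrace_eq_zero_of_isNilpotent [IsReduced F] {x : R} (hx : IsNilpotent x) :
    regularTrace F x = 0 :=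
  (LinearMap.isNilpotent_trace_of_isNilpotent (hx.map (Algebra.lmul F R))).eq_zero

theorem regularTrace_derivation {d : R →ₗ[F] R} (hd : ∀ x y, d (x * y) = d x * y + x * d y)
    (x : R) : regularTrace F (d x) = 0 := by
  have lmul_d : Algebra.lmul F R (d x) = ⁅(d : Module.End F R), Algebra.lmul F R x⁆ := by
    ext y
    simp [Ring.lie_def, hd]
  rw [regularTrace_apply, lmul_d, LinearMap.trace_lie]

end Trace

variable {F R : Type*} [Field F] [CharZero F] [Ring R] [Algebra F R] [FiniteDimensional F R]

theorem isNilpotent_of_forall_regularTrace_mul_eq_zero {x : R}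
    (h : ∀ y, regularTrace F (y * x) = 0) : IsNilpotent x := by
  obtain ⟨y, n, he, hn⟩ :=
    exists_isIdempotentElem_mul_of_isIntegral (Algebra.IsIntegral.isIntegral (R := F) x)
  have hyx : Algebra.lmul F R (y * x) = 0 :=
    LinearMap.IsIdempotentElem.eq_zero_of_trace_eq_zero (he.map (Algebra.lmul F R)) (h y)
  rw [map_eq_zero_iff _ Algebra.lmul_injective] at hyx
  exact ⟨n, by rw [← hn, hyx, zero_mul]⟩

theorem mem_jacobson_iff_forall_regularTrace_mul_eq_zero {x : R} :
    x ∈ Ring.jacobson R ↔ ∀ y, regularTrace F (y * x) = 0 := by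
  have : IsArtinianRing R := IsArtinianRing.of_finite F R
  refine ⟨fun hx y ↦ regularTrace_eq_zero_of_isNilpotent <|
    isNilpotent_of_mem_jacobson (Ideal.mul_mem_left _ y hx), fun h ↦ ?_⟩
  refine mem_jacobson_of_forall_isNilpotent_mul fun y ↦
    isNilpotent_of_forall_regularTrace_mul_eq_zero (F := F) fun z ↦ ?_
  rw [← mul_assoc]
  exact h (z * y)

theorem derivation_mem_jacobson {d : R →ₗ[F] R}
    (hd : ∀ x y, d (x * y) = d x * y + x * d y) {x : R} (hx : x ∈ Ring.jacobson R) :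
    d x ∈ Ring.jacobson R := by
  rw [mem_jacobson_iff_forall_regularTrace_mul_eq_zero (F := F)] at hx ⊢
  intro y
  have trace_d : regularTrace F (d (y * x)) = 0 := regularTrace_derivation hd _
  rwa [hd, map_add, hx, zero_add] at trace_d

end FiniteDimensionalAlgebra

theorem mul_pow_le_of_mul_le_mul {α : Type*} [Monoid α] [Preorder α] [MulLeftMono α]
    [MulRightMono α] {u m : α} (one_le : 1 ≤ u) (mul_self_le : u * u ≤ u)
    (mul_le : m * u ≤ u * m) (n : ℕ) : (u * m) ^ n ≤ u * m ^ n := by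
  induction n with
  | zero => simpa only [pow_zero, mul_one] using one_le
  | succ n ih =>
    calc (u * m) ^ (n + 1) = u * m * (u * m) ^ n := pow_succ' _ _
      _ ≤ u * m * (u * m ^ n) := mul_le_mul_right ih _
      _ = u * (m * u) * m ^ n := by simp only [mul_assoc]
      _ ≤ u * (u * m) * m ^ n := mul_le_mul_left (mul_le_mul_right mul_le _) _
      _ = u * u * m ^ (n + 1) := by simp only [pow_succ', mul_assoc]
      _ ≤ u * m ^ (n + 1) := mul_le_mul_left mul_self_le _

section JacobsonRadical

section CommRing

variable {F E : Type*} [CommRing F] [Ring E] [Algebra F E]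

/-- The Jacobson radical of a subalgebra `R` of `E`, as a subspace of `E`, so that the radicals of
different subalgebras can be compared. -/
def jacobsonRadical (R : Subalgebra F E) : Submodule F E :=
  ((Ring.jacobson R).restrictScalars F).map R.val.toLinearMap

theorem coe_mem_jacobsonRadical {R : Subalgebra F E} {x : R} :
    (x : E) ∈ jacobsonRadical R ↔ x ∈ Ring.jacobson R :=
  Subtype.val_injective.mem_set_image

theorem jacobsonRadical_le (R : Subalgebra F E) :
    jacobsonRadical R ≤ Subalgebra.toSubmodule R := by
  rintro _ ⟨x, -, rfl⟩
  exact x.2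

theorem mul_mem_jacobsonRadical_left {R : Subalgebra F E} {r x : E} (hr : r ∈ R)
    (hx : x ∈ jacobsonRadical R) : r * x ∈ jacobsonRadical R := by
  lift x to R using jacobsonRadical_le R hx
  lift r to R using hr
  exact coe_mem_jacobsonRadical.2 (Ideal.mul_mem_left _ r (coe_mem_jacobsonRadical.1 hx))

theorem mul_mem_jacobsonRadical_right {R : Subalgebra F E} {r x : E} (hr : r ∈ R)
    (hx : x ∈ jacobsonRadical R) : x * r ∈ jacobsonRadical R := by
  lift x to R using jacobsonRadical_le R hx
  lift r to R using hr
  exact coe_mem_jacobsonRadical.2 (Ideal.mul_mem_right r _ (coe_mem_jacobsonRadical.1 hx))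

theorem mem_jacobsonRadical_of_forall_isNilpotent_mul {R : Subalgebra F E} {x : E} (hx : x ∈ R)
    (h : ∀ r ∈ R, IsNilpotent (r * x)) : x ∈ jacobsonRadical R := by
  lift x to R using hx
  refine coe_mem_jacobsonRadical.2 (mem_jacobson_of_forall_isNilpotent_mul fun r ↦ ?_)
  exact (IsNilpotent.map_iff (f := R.val) Subtype.val_injective).1 (h r r.2)

theorem lie_mul_eq (a x y : E) : ⁅a, x * y⁆ = ⁅a, x⁆ * y + x * ⁅a, y⁆ := by
  simp only [Ring.lie_def]
  noncomm_ring

theorem lie_mem_adjoin {S : Set E} {a : E} (ha : ∀ s ∈ S, ⁅a, s⁆ ∈ S) {r : E}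
    (hr : r ∈ Algebra.adjoin F S) : ⁅a, r⁆ ∈ Algebra.adjoin F S := by
  induction hr using Algebra.adjoin_induction with
  | mem s hs => exact Algebra.subset_adjoin (ha s hs)
  | algebraMap c =>
    rw [Ring.lie_def, Algebra.commutes, sub_self]
    exact zero_mem _
  | add x y _ _ hx hy =>
    rw [Ring.lie_def, mul_add, add_mul, add_sub_add_comm]
    exact add_mem hx hy
  | mul x y hx' hy' hx hy =>
    rw [lie_mul_eq]
    exact add_mem (mul_mem hx hy') (mul_mem hx' hy)

theorem mul_toSubmodule_adjoin_le {S : Set E} {M : Submodule F E}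
    (h : ∀ x ∈ M, ∀ a ∈ S, x * a ∈ Subalgebra.toSubmodule (Algebra.adjoin F S) * M) :
    M * Subalgebra.toSubmodule (Algebra.adjoin F S) ≤
      Subalgebra.toSubmodule (Algebra.adjoin F S) * M := by
  set U := Subalgebra.toSubmodule (Algebra.adjoin F S)
  have mul_mem_of_forall_mem {u z : E} (hu : ∀ x ∈ M, x * u ∈ U * M) (hz : z ∈ U * M) :
      z * u ∈ U * M := by
    induction hz using Submodule.mul_induction_on' with
    | mem_mul_mem v hv x hx =>
      have : v * (x * u) ∈ U * (U * M) := Submodule.mul_mem_mul hv (hu x hx)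
      rwa [← mul_assoc, ← mul_assoc, (Subalgebra.isIdempotentElem_toSubmodule _).eq] at this
    | add y _ z _ hy hz => rw [add_mul]; exact add_mem hy hz
  refine Submodule.mul_le.2 fun x hx u hu ↦ ?_
  induction hu using Algebra.adjoin_induction generalizing x with
  | mem a ha => exact h x hx a ha
  | algebraMap c =>
    rw [← Algebra.commutes]
    exact Submodule.mul_mem_mul (algebraMap_mem (Algebra.adjoin F S) c) hx
  | add u v _ _ hu hv => rw [mul_add]; exact add_mem (hu x hx) (hv x hx)
  | mul u v _ _ hu hv =>
    rw [← mul_assoc]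
    exact mul_mem_of_forall_mem hv (hu x hx)

theorem le_jacobsonRadical_adjoin {S : Set E} {M : Submodule F E}
    (hMS : M ≤ Subalgebra.toSubmodule (Algebra.adjoin F S))
    (h : ∀ x ∈ M, ∀ a ∈ S, x * a ∈ Subalgebra.toSubmodule (Algebra.adjoin F S) * M)
    (hM : IsNilpotent M) : M ≤ jacobsonRadical (Algebra.adjoin F S) := by
  obtain ⟨n, hn⟩ := hM
  set U := Subalgebra.toSubmodule (Algebra.adjoin F S)
  have pow_eq_bot : (U * M) ^ n = ⊥ := by
    have := mul_pow_le_of_mul_le_mul (Submodule.one_le.2 (one_mem (Algebra.adjoin F S)))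
      (Subalgebra.isIdempotentElem_toSubmodule _).le (mul_toSubmodule_adjoin_le h) n
    rwa [hn, Submodule.zero_eq_bot, Submodule.mul_bot, le_bot_iff] at this
  refine fun x hx ↦ mem_jacobsonRadical_of_forall_isNilpotent_mul (hMS hx) fun r hr ↦ ⟨n, ?_⟩
  rw [← Submodule.mem_bot F, ← pow_eq_bot]
  exact Submodule.pow_mem_pow _ (Submodule.mul_mem_mul hr hx) n

theorem le_jacobsonRadical_adjoin_self {M : Submodule F E} (hM : IsNilpotent M) :
    M ≤ jacobsonRadical (Algebra.adjoin F (M : Set E)) :=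
  le_jacobsonRadical_adjoin Algebra.subset_adjoin
    (fun _ hx _ ha ↦ Submodule.mul_mem_mul (Algebra.subset_adjoin hx) ha) hM

end CommRing

variable {F E : Type*} [Field F] [Ring E] [Algebra F E]

theorem isNilpotent_jacobsonRadical (R : Subalgebra F E) [FiniteDimensional F R] :
    IsNilpotent (jacobsonRadical R) := by
  have : IsArtinianRing R := IsArtinianRing.of_finite F R
  obtain ⟨n, hn⟩ := IsSemiprimaryRing.isNilpotent (R := R)
  have hn' : Ring.jacobson R ^ (n + 1) = ⊥ := by
    rw [Submodule.pow_succ, hn, Submodule.zero_eq_bot, Submodule.bot_mul]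
  refine ⟨n + 1, ?_⟩
  rw [jacobsonRadical, ← Submodule.map_pow, ← Submodule.restrictScalars_pow n.succ_ne_zero, hn',
    Submodule.restrictScalars_bot, Submodule.map_bot, Submodule.zero_eq_bot]

theorem lie_mem_jacobsonRadical [CharZero F] {R : Subalgebra F E} [FiniteDimensional F R] {a : E}
    (ha : ∀ r ∈ R, ⁅a, r⁆ ∈ R) {x : E} (hx : x ∈ jacobsonRadical R) :
    ⁅a, x⁆ ∈ jacobsonRadical R := by
  let d : R →ₗ[F] R := (LinearMap.mulLeft F a - LinearMap.mulRight F a).restrict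
    (p := Subalgebra.toSubmodule R) (q := Subalgebra.toSubmodule R) ha
  have hd (x y : R) : d (x * y) = d x * y + x * d y := Subtype.ext (lie_mul_eq a x y)
  lift x to R using jacobsonRadical_le R hx
  exact coe_mem_jacobsonRadical.2 (derivation_mem_jacobson hd (coe_mem_jacobsonRadical.1 hx))

theorem jacobsonRadical_le_of_lie_mem [CharZero F] {R : Subalgebra F E} [FiniteDimensional F R]
    {S : Set E} (hRS : R ≤ Algebra.adjoin F S) (hS : ∀ a ∈ S, ∀ r ∈ R, ⁅a, r⁆ ∈ R) :
    jacobsonRadical R ≤ jacobsonRadical (Algebra.adjoin F S) := by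
  refine le_jacobsonRadical_adjoin ((jacobsonRadical_le R).trans hRS) (fun x hx a ha ↦ ?_)
    (isNilpotent_jacobsonRadical R)
  have mul_eq : x * a = a * x - 1 * ⁅a, x⁆ := by rw [Ring.lie_def]; noncomm_ring
  rw [mul_eq]
  exact sub_mem (Submodule.mul_mem_mul (Algebra.subset_adjoin ha) hx)
    (Submodule.mul_mem_mul (one_mem (Algebra.adjoin F S)) (lie_mem_jacobsonRadical (hS a ha) hx))

end JacobsonRadical

section Products

variable {F A : Type*} [Field F] [AddCommGroup A] [Module F A] {mul : A →ₗ[F] A →ₗ[F] A}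

theorem mulSub_le {B C D : Submodule F A} :
    mulSub mul B C ≤ D ↔ ∀ b ∈ B, ∀ c ∈ C, mul b c ∈ D := by
  refine Submodule.span_le.trans ⟨fun h b hb c hc ↦ h ⟨b, hb, c, hc, rfl⟩, ?_⟩
  rintro h _ ⟨b, hb, c, hc, rfl⟩
  exact h b hb c hc

theorem mul_mem_mulSub {B C : Submodule F A} {b c : A} (hb : b ∈ B) (hc : c ∈ C) :
    mul b c ∈ mulSub mul B C :=
  mulSub_le.1 le_rfl b hb c hc

theorem mulSub_mono {B B' C C' : Submodule F A} (hB : B ≤ B') (hC : C ≤ C') :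
    mulSub mul B C ≤ mulSub mul B' C' :=
  mulSub_le.2 fun _ hb _ hc ↦ mul_mem_mulSub (hB hb) (hC hc)

theorem mulSub_eq_map_smul (B C : Submodule F A) :
    mulSub mul B C = (B.map mul : Submodule F (Module.End F A)) • C := by
  apply le_antisymm
  · exact mulSub_le.2 fun b hb c hc ↦ Submodule.smul_mem_smul (Submodule.mem_map_of_mem hb) hc
  · rw [Submodule.smul_le]
    rintro _ ⟨b, hb, rfl⟩ c hc
    exact mul_mem_mulSub hb hc

theorem lcs_eq_map_pow_smul (B : Submodule F A) (n : ℕ) :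
    lcs mul B n = (B.map mul : Submodule F (Module.End F A)) ^ n • B := by
  induction n with
  | zero => rw [lcs, pow_zero, Submodule.one_smul]
  | succ n ih => rw [lcs, mulSub_eq_map_smul, ih, pow_succ', ← smul_eq_mul, Submodule.smul_assoc]

theorem lcs_mono {B C : Submodule F A} (h : B ≤ C) (n : ℕ) : lcs mul B n ≤ lcs mul C n := by
  induction n with
  | zero => exact h
  | succ n ih => exact mulSub_mono h ih

theorem lcs_succ_le {N : Submodule F A} (hN : IsSubalg mul N) (n : ℕ) :
    lcs mul N (n + 1) ≤ lcs mul N n := by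
  induction n with
  | zero => exact mulSub_le.2 hN
  | succ n ih => exact mulSub_mono le_rfl ih

theorem IsNilpotentSub.mono {B C : Submodule F A} (hC : IsNilpotentSub mul C) (h : B ≤ C) :
    IsNilpotentSub mul B :=
  hC.imp fun n hn ↦ le_bot_iff.1 ((lcs_mono h n).trans_eq hn)

theorem isNilpotentSub_of_isNilpotent_map {B : Submodule F A}
    (h : IsNilpotent (B.map mul : Submodule F (Module.End F A))) : IsNilpotentSub mul B := by
  obtain ⟨n, hn⟩ := h
  exact ⟨n, by rw [lcs_eq_map_pow_smul, hn, Submodule.zero_eq_bot, Submodule.bot_smul]⟩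

theorem IsIdealIn.isSubalg {I S : Submodule F A} (h : IsIdealIn mul I S) : IsSubalg mul I :=
  fun x hx y hy ↦ (h.2 x (h.1 hx) y hy).1

theorem isSubalg_subalgGen (s : Set A) : IsSubalg mul (subalgGen mul s) := by
  intro x hx y hy
  rw [subalgGen, Submodule.mem_sInf] at *
  exact fun S hS ↦ hS.1 x (hx S hS) y (hy S hS)

theorem subalgGen_le {s : Set A} {S : Submodule F A} (hS : IsSubalg mul S)
    (hs : s ⊆ (S : Set A)) : subalgGen mul s ≤ S :=
  sInf_le ⟨hS, hs⟩

theorem IsSubinvariantIn.isSubalg {B S : Submodule F A} (h : IsSubinvariantIn mul B S) :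
    IsSubalg mul B := by
  obtain ⟨t, c, rfl, -, hc, -⟩ := h
  exact hc 0 t.zero_le

theorem IsSubinvariantIn.induction {B S : Submodule F A} (h : IsSubinvariantIn mul B S)
    {P : Submodule F A → Prop} (base : P B) (step : ∀ I T, IsIdealIn mul I T → P I → P T) :
    P S := by
  obtain ⟨t, c, rfl, rfl, -, hc⟩ := h
  suffices ∀ i ≤ t, P (c i) from this t le_rfl
  intro i hi
  induction i with
  | zero => exact base
  | succ i ih => exact step _ _ (hc i hi) (ih (by omega))

theorem IsIdealIn.isSubinvariantIn_trans {I T S : Submodule F A} (hI : IsIdealIn mul I T)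
    (hT : IsSubinvariantIn mul T S) : IsSubinvariantIn mul I S := by
  obtain ⟨t, c, rfl, rfl, hsub, hideal⟩ := hT
  refine ⟨t + 1, fun | 0 => I | i + 1 => c i, rfl, rfl, ?_, ?_⟩
  · rintro (_ | i) hi
    · exact hI.isSubalg
    · exact hsub i (by omega)
  · rintro (_ | i) hi
    · exact hI
    · exact hideal i (by omega)

theorem isSubinvariantIn_refl {S : Submodule F A} (hS : IsSubalg mul S) :
    IsSubinvariantIn mul S S :=
  ⟨0, fun _ ↦ S, rfl, rfl, fun _ _ ↦ hS, by simp⟩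

theorem IsSubinvariantIn.isNilpotent_map {B : Submodule F A} (hB : IsSubinvariantIn mul B ⊤)
    (hBnil : IsNilpotentSub mul B) :
    IsNilpotent (B.map mul : Submodule F (Module.End F A)) := by
  set M : Submodule F (Module.End F A) := B.map mul with hM
  obtain ⟨-, t, ht⟩ : B ≤ ⊤ ∧ ∃ t, M ^ t • (⊤ : Submodule F A) ≤ B := by
    refine hB.induction (P := fun T ↦ B ≤ T ∧ ∃ t, M ^ t • T ≤ B)
      ⟨le_rfl, 0, by rw [pow_zero, Submodule.one_smul]⟩ ?_
    rintro I T hI ⟨hBI, t, ht⟩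
    have map_smul_le : M • T ≤ I := by
      rw [hM, ← mulSub_eq_map_smul, mulSub_le]
      exact fun b hb x hx ↦ (hI.2 x hx b (hBI hb)).2
    refine ⟨hBI.trans hI.1, t + 1, ?_⟩
    rw [pow_succ, ← smul_eq_mul, Submodule.smul_assoc]
    exact (Submodule.smul_mono le_rfl map_smul_le).trans ht
  obtain ⟨m, hm⟩ := hBnil
  have pow_smul_top : M ^ (m + t) • (⊤ : Submodule F A) ≤ ⊥ := by
    rw [pow_add, ← smul_eq_mul, Submodule.smul_assoc, ← hm, lcs_eq_map_pow_smul]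
    exact Submodule.smul_mono le_rfl ht
  refine ⟨m + t, (Submodule.eq_bot_iff _).2 fun f hf ↦ LinearMap.ext fun v ↦ ?_⟩
  exact (Submodule.mem_bot F).1 (pow_smul_top (Submodule.smul_mem_smul hf Submodule.mem_top))

end Products

section Leibniz

variable {F A : Type*} [Field F] [AddCommGroup A] [Module F A] {mul : A →ₗ[F] A →ₗ[F] A}

/-- The left Leibniz identity: every left multiplication is a derivation. -/
def IsLeftLeibniz (mul : A →ₗ[F] A →ₗ[F] A) : Prop :=
  ∀ x y z, mul x (mul y z) = mul (mul x y) z + mul y (mul x z)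

theorem lcs_mul_lcs_le (hmul : IsLeftLeibniz mul) (N : Submodule F A) (i j : ℕ) :
    mulSub mul (lcs mul N i) (lcs mul N j) ≤ lcs mul N (i + j + 1) := by
  induction i generalizing j with
  | zero => rw [zero_add]; exact le_rfl
  | succ i ih =>
    suffices ∀ q ∈ lcs mul N j,
        lcs mul N (i + 1) ≤ (lcs mul N (i + 1 + j + 1)).comap (mul.flip q) from
      mulSub_le.2 fun p hp q hq ↦ this q hq hp
    refine fun q hq ↦ mulSub_le.2 fun a ha b hb ↦ ?_
    have mul_mul_eq : mul (mul a b) q = mul a (mul b q) - mul b (mul a q) := by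
      rw [hmul a b q, add_sub_cancel_right]
    rw [Submodule.mem_comap, LinearMap.flip_apply, mul_mul_eq]
    refine sub_mem ?_ ?_
    · rw [add_right_comm i 1 j]
      exact mul_mem_mulSub ha (mulSub_le.1 (ih j) b hb q hq)
    · rw [add_assoc i 1 j, add_comm 1 j]
      exact mulSub_le.1 (ih (j + 1)) b hb _ (mul_mem_mulSub ha hq)

theorem isIdealIn_sup_lcs_succ (hmul : IsLeftLeibniz mul) {N D : Submodule F A}
    (hN : IsSubalg mul N) (hD : IsSubalg mul D) (hDN : D ≤ N) (j : ℕ) :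
    IsIdealIn mul (D ⊔ lcs mul N (j + 1)) (D ⊔ lcs mul N j) := by
  have lcs_le (k : ℕ) : lcs mul N k ≤ N := antitone_nat_of_succ_le (lcs_succ_le hN) k.zero_le
  have mul_left_mem {u v : A} (hu : u ∈ N) (hv : v ∈ lcs mul N j) : mul u v ∈ lcs mul N (j + 1) :=
    mul_mem_mulSub hu hv
  have mul_right_mem {u v : A} (hu : u ∈ N) (hv : v ∈ lcs mul N j) : mul v u ∈ lcs mul N (j + 1) :=
    mulSub_le.1 (lcs_mul_lcs_le hmul N j 0) v hv u hu
  refine ⟨sup_le_sup_left (lcs_succ_le hN j) D, fun x hx y hy ↦ ?_⟩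
  obtain ⟨a, ha, b, hb, rfl⟩ := Submodule.mem_sup.1 hx
  obtain ⟨a', ha', b', hb', rfl⟩ := Submodule.mem_sup.1 hy
  have hab : a + b ∈ N := add_mem (hDN ha) (lcs_le j hb)
  replace hb' : b' ∈ lcs mul N j := lcs_succ_le hN j hb'
  have mul_eq : mul (a + b) (a' + b') = mul a a' + (mul b a' + mul (a + b) b') := by
    simp only [map_add, LinearMap.add_apply]; abel
  have mul_eq' : mul (a' + b') (a + b) = mul a' a + (mul a' b + mul b' (a + b)) := by
    simp only [map_add, LinearMap.add_apply]; abel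
  rw [mul_eq, mul_eq']
  exact ⟨Submodule.add_mem_sup (hD a ha a' ha') (add_mem (mul_right_mem (hDN ha') hb)
    (mul_left_mem hab hb')), Submodule.add_mem_sup (hD a' ha' a ha)
    (add_mem (mul_left_mem (hDN ha') hb) (mul_right_mem hab hb'))⟩

theorem IsSubalg.isSubinvariantIn_of_le (hmul : IsLeftLeibniz mul) {D N S : Submodule F A}
    (hD : IsSubalg mul D) (hDN : D ≤ N) (hN : IsSubinvariantIn mul N S)
    (hNnil : IsNilpotentSub mul N) : IsSubinvariantIn mul D S := by
  obtain ⟨m, hm⟩ := hNnil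
  suffices ∀ j, IsSubinvariantIn mul (D ⊔ lcs mul N j) S by
    simpa only [hm, sup_bot_eq] using this m
  intro j
  induction j with
  | zero => rwa [lcs, sup_eq_right.2 hDN]
  | succ j ih =>
    exact (isIdealIn_sup_lcs_succ hmul hN.isSubalg hD hDN j).isSubinvariantIn_trans ih

theorem IsLeftLeibniz.mul_mul_eq_lie (hmul : IsLeftLeibniz mul) (x y : A) :
    mul (mul x y) = ⁅(mul x : Module.End F A), (mul y : Module.End F A)⁆ := by
  refine LinearMap.ext fun z ↦ ?_
  exact eq_sub_of_add_eq (hmul x y z).symm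

variable (mul) in
/-- The associative algebra of endomorphisms of `A` generated by the left multiplications by
elements of `T`. -/
def leftMulAlgebra (T : Submodule F A) : Subalgebra F (Module.End F A) :=
  Algebra.adjoin F (T.map mul : Set (Module.End F A))

variable (mul) in
/-- The elements of `A` whose left multiplication lies in the Jacobson radical of the associative
algebra generated by all left multiplications. -/
def jacobsonIdeal : Submodule F A :=
  (jacobsonRadical (leftMulAlgebra mul ⊤)).comap mul

theorem isIdealIn_jacobsonIdeal (hmul : IsLeftLeibniz mul) :
    IsIdealIn mul (jacobsonIdeal mul) ⊤ := by
  have mul_mem (x : A) : (mul x : Module.End F A) ∈ leftMulAlgebra mul ⊤ :=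
    Algebra.subset_adjoin (Submodule.mem_map_of_mem Submodule.mem_top)
  refine ⟨le_top, fun x _ y hy ↦ ?_⟩
  have left := mul_mem_jacobsonRadical_left (mul_mem x) hy
  have right := mul_mem_jacobsonRadical_right (mul_mem x) hy
  simp only [jacobsonIdeal, Submodule.mem_comap, hmul.mul_mul_eq_lie, Ring.lie_def]
  exact ⟨sub_mem left right, sub_mem right left⟩

variable [FiniteDimensional F A]

theorem isNilpotentSub_jacobsonIdeal : IsNilpotentSub mul (jacobsonIdeal mul) := by
  obtain ⟨n, hn⟩ := isNilpotent_jacobsonRadical (leftMulAlgebra mul ⊤)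
  refine isNilpotentSub_of_isNilpotent_map ⟨n, le_bot_iff.1 (le_trans ?_ hn.le)⟩
  exact pow_le_pow_left' (Submodule.map_comap_le _ _) n

variable [CharZero F]

theorem IsIdealIn.jacobsonRadical_leftMulAlgebra_le (hmul : IsLeftLeibniz mul)
    {I T : Submodule F A} (hI : IsIdealIn mul I T) :
    jacobsonRadical (leftMulAlgebra mul I) ≤ jacobsonRadical (leftMulAlgebra mul T) := by
  refine jacobsonRadical_le_of_lie_mem (Algebra.adjoin_mono (Submodule.map_mono hI.1)) ?_
  rintro _ ⟨a, ha, rfl⟩ r hr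
  refine lie_mem_adjoin ?_ hr
  rintro _ ⟨x, hx, rfl⟩
  exact ⟨mul a x, (hI.2 a ha x hx).1, hmul.mul_mul_eq_lie a x⟩

theorem IsSubinvariantIn.le_jacobsonIdeal (hmul : IsLeftLeibniz mul)
    {B : Submodule F A} (hB : IsSubinvariantIn mul B ⊤) (hBnil : IsNilpotentSub mul B) :
    B ≤ jacobsonIdeal mul :=
  Submodule.map_le_iff_le_comap.1 <|
    hB.induction (P := fun T ↦ B.map mul ≤ jacobsonRadical (leftMulAlgebra mul T))
      (le_jacobsonRadical_adjoin_self (hB.isNilpotent_map hBnil))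
      fun _ _ hI hBI ↦ hBI.trans (hI.jacobsonRadical_leftMulAlgebra_le hmul)

end Leibniz

/-- over characteristic zero, the subalgebra generated by two
nilpotent subinvariant subalgebras is a nilpotent subinvariant subalgebra. -/
theorem stmt_16 {F A : Type*} [Field F] [CharZero F]
    [AddCommGroup A] [Module F A] [FiniteDimensional F A]
    (mul : A →ₗ[F] A →ₗ[F] A)
    (hleib : ∀ x y z : A, mul x (mul y z) = mul (mul x y) z + mul y (mul x z))
    (B C : Submodule F A)
    (hB : IsSubinvariantIn mul B ⊤) (hBnil : IsNilpotentSub mul B)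
    (hC : IsSubinvariantIn mul C ⊤) (hCnil : IsNilpotentSub mul C) :
    IsSubalg mul (subalgGen mul ((B : Set A) ∪ (C : Set A))) ∧
    IsNilpotentSub mul (subalgGen mul ((B : Set A) ∪ (C : Set A))) ∧
    IsSubinvariantIn mul (subalgGen mul ((B : Set A) ∪ (C : Set A))) ⊤ := by
  have hN : IsIdealIn mul (jacobsonIdeal mul) ⊤ := isIdealIn_jacobsonIdeal hleib
  have hNsub : IsSubinvariantIn mul (jacobsonIdeal mul) ⊤ :=
    hN.isSubinvariantIn_trans (isSubinvariantIn_refl fun _ _ _ _ ↦ Submodule.mem_top)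
  have hNnil : IsNilpotentSub mul (jacobsonIdeal mul) := isNilpotentSub_jacobsonIdeal
  have hDN : subalgGen mul ((B : Set A) ∪ (C : Set A)) ≤ jacobsonIdeal mul :=
    subalgGen_le hN.isSubalg
      (Set.union_subset (hB.le_jacobsonIdeal hleib hBnil) (hC.le_jacobsonIdeal hleib hCnil))
  have hD : IsSubalg mul (subalgGen mul ((B : Set A) ∪ (C : Set A))) := isSubalg_subalgGen _
  exact ⟨hD, hNnil.mono hDN, hD.isSubinvariantIn_of_le hleib hDN hNsub hNnil⟩
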